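/- arXiv:2009.12107 — 3 statements merged into one kernel-verified Lean document; each statement's English description precedes it below -/
import Mathlib

section
/- Let R be a commutative ring and n = 2. A block-diagonal matrix diag(g₁, g₂) with g₁, g₂ ∈ GL_2(R) lies in Spin_4(R) if and only if det g₁ = 1 and det g₂ = 1; consequently Spin_4(R) ≅ SL_2(R) × SL_2(R). -/
open Matrix

noncomputable section

/-- Reindexing equivalence `Fin (2 ^ n) ⊕ Fin (2 ^ n) ≃ Fin (2 ^ (n + 1))`. -/
def pow2Equiv (n : ℕ) : Fin (2 ^ n) ⊕ Fin (2 ^ n) ≃ Fin (2 ^ (n + 1)) :=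
  finSumFinEquiv.trans (finCongr (by rw [pow_succ]; ring))

/-- The Suslin matrix `S_n(v, w)` of size `2 ^ n` associated to `v, w : Fin (n+1) → R`. -/
def sus (R : Type) [CommRing R] : (n : ℕ) → (Fin (n + 1) → R) → (Fin (n + 1) → R) →
    Matrix (Fin (2 ^ n)) (Fin (2 ^ n)) R
  | 0, v, _ => v 0 • 1
  | n + 1, v, w =>
      Matrix.reindex (pow2Equiv n) (pow2Equiv n)
        (Matrix.fromBlocks (v 0 • 1) (sus R n (v ∘ Fin.succ) (w ∘ Fin.succ))
          (-(sus R n (w ∘ Fin.succ) (v ∘ Fin.succ))ᵀ) (w 0 • 1))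

/-- The conjugate Suslin matrix `S̄_n(v, w) = S_n(w, v)ᵀ`. -/
def susBar (R : Type) [CommRing R] (n : ℕ) (v w : Fin (n + 1) → R) :
    Matrix (Fin (2 ^ n)) (Fin (2 ^ n)) R :=
  (sus R n w v)ᵀ

/-- Suslin's matrices `J_n`. -/
def Jmat (R : Type) [CommRing R] : (n : ℕ) → Matrix (Fin (2 ^ n)) (Fin (2 ^ n)) R
  | 0 => 1
  | n + 1 =>
      if Even (n + 1) then
        Matrix.reindex (pow2Equiv n) (pow2Equiv n)
          (Matrix.fromBlocks (Jmat R n) 0 0 (-(Jmat R n)))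
      else
        Matrix.reindex (pow2Equiv n) (pow2Equiv n)
          (Matrix.fromBlocks 0 (Jmat R n) (-(Jmat R n)) 0)

/-- The involution `M ↦ M* = J_n · Mᵀ · J_nᵀ`. -/
def invol (R : Type) [CommRing R] (n : ℕ) (M : Matrix (Fin (2 ^ n)) (Fin (2 ^ n)) R) :
    Matrix (Fin (2 ^ n)) (Fin (2 ^ n)) R :=
  Jmat R n * Mᵀ * (Jmat R n)ᵀ

/-- `φ(v, w) = [[0, S_n(v,w)], [S̄_n(v,w), 0]]` (note the shift: vectors in `R^{n+1}`,
matrices of size `2 ^ (n + 1)`). -/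
def phiMat (R : Type) [CommRing R] (n : ℕ) (v w : Fin (n + 1) → R) :
    Matrix (Fin (2 ^ (n + 1))) (Fin (2 ^ (n + 1))) R :=
  Matrix.reindex (pow2Equiv n) (pow2Equiv n)
    (Matrix.fromBlocks 0 (sus R n v w) (susBar R n v w) 0)

/-- The set of Suslin matrices of size `2 ^ m`. -/
def SuslinSet (R : Type) [CommRing R] (m : ℕ) : Set (Matrix (Fin (2 ^ m)) (Fin (2 ^ m)) R) :=
  {S | ∃ v w : Fin (m + 1) → R, S = sus R m v w}

/-- The image of the hyperbolic space `R^{m+1} ⊕ R^{m+1}` inside the Clifford algebra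
`M_{2^{m+1}}(R)`. -/
def PhiSet (R : Type) [CommRing R] (m : ℕ) :
    Set (Matrix (Fin (2 ^ (m + 1))) (Fin (2 ^ (m + 1))) R) :=
  {x | ∃ v w : Fin (m + 1) → R, x = phiMat R m v w}

/-- The block diagonal matrix `diag(g₁, g₂)`. -/
def diagBlock (R : Type) [CommRing R] (m : ℕ)
    (g₁ g₂ : Matrix (Fin (2 ^ m)) (Fin (2 ^ m)) R) :
    Matrix (Fin (2 ^ (m + 1))) (Fin (2 ^ (m + 1))) R :=
  Matrix.reindex (pow2Equiv m) (pow2Equiv m) (Matrix.fromBlocks g₁ 0 0 g₂)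

/-- `Spin_{2(m+1)}(R)`, as the set of pairs `(g₁, g₂)` such that `x = diag(g₁, g₂)`
satisfies `x · x* = 1` and conjugation by `x` maps the image of the hyperbolic space
onto itself. -/
def SpinPair (R : Type) [CommRing R] (m : ℕ) :
    Set (Matrix (Fin (2 ^ m)) (Fin (2 ^ m)) R × Matrix (Fin (2 ^ m)) (Fin (2 ^ m)) R) :=
  {p | IsUnit p.1 ∧ IsUnit p.2 ∧
    diagBlock R m p.1 p.2 * invol R (m + 1) (diagBlock R m p.1 p.2) = 1 ∧
    (fun y => diagBlock R m p.1 p.2 * y * (diagBlock R m p.1 p.2)⁻¹) '' PhiSet R m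
      = PhiSet R m}

/-- The group `G_m(R)` of `g ∈ GL_{2^m}(R)` such that `g · S · g*` is a Suslin matrix
for every Suslin matrix `S`. -/
def GSet (R : Type) [CommRing R] (m : ℕ) : Set (Matrix (Fin (2 ^ m)) (Fin (2 ^ m)) R) :=
  {g | IsUnit g ∧ ∀ S ∈ SuslinSet R m, g * S * invol R m g ∈ SuslinSet R m}

/-- The group `SG_m(R)` of `g ∈ G_m(R)` preserving the length `l(S(v,w)) = v ⬝ᵥ w`. -/
def SGSet (R : Type) [CommRing R] (m : ℕ) : Set (Matrix (Fin (2 ^ m)) (Fin (2 ^ m)) R) :=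
  {g | g ∈ GSet R m ∧ ∀ v w v' w' : Fin (m + 1) → R,
    g * sus R m v w * invol R m g = sus R m v' w' → v' ⬝ᵥ w' = v ⬝ᵥ w}

/-- The hyperbolic quadratic form `q(v, w) = v ⬝ᵥ w` on `R^n ⊕ R^n`. -/
def hypForm (R : Type) [CommRing R] (n : ℕ) :
    QuadraticForm R ((Fin n → R) × (Fin n → R)) :=
  LinearMap.BilinMap.toQuadraticMap
    (LinearMap.mk₂ R (fun x y => x.1 ⬝ᵥ y.2)
      (fun x x' y => by simp [add_dotProduct])
      (fun c x y => by simp [smul_dotProduct])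
      (fun x y y' => by simp [dotProduct_add])
      (fun x c y => by simp [dotProduct_smul]))

/-- `E_i = S_m(e_i, 0)`. -/
def Emat (R : Type) [CommRing R] (m : ℕ) (i : Fin (m + 1)) :
    Matrix (Fin (2 ^ m)) (Fin (2 ^ m)) R :=
  sus R m (Pi.single i 1) 0

/-- `F_i = S_m(0, e_i)`. -/
def Fmat (R : Type) [CommRing R] (m : ℕ) (i : Fin (m + 1)) :
    Matrix (Fin (2 ^ m)) (Fin (2 ^ m)) R :=
  sus R m 0 (Pi.single i 1)


theorem sus_one_eq (R : Type) [CommRing R] (v w : Fin 2 → R) :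
    sus R 1 v w = (!![v 0, v 1; -w 1, w 0] : Matrix (Fin 2) (Fin 2) R) := by
  ext i j
  fin_cases i <;> fin_cases j <;>
    simp [sus, pow2Equiv, finSumFinEquiv, Fin.addCases, Matrix.fromBlocks]

theorem susBar_one_eq (R : Type) [CommRing R] (v w : Fin 2 → R) :
    susBar R 1 v w = (sus R 1 v w).adjugate := by
  rw [susBar, sus_one_eq, sus_one_eq]
  erw [Matrix.adjugate_fin_two]
  ext i j
  fin_cases i <;> fin_cases j <;> simp

theorem Jmat_one_eq (R : Type) [CommRing R] :
    Jmat R 1 = (!![0, 1; -1, 0] : Matrix (Fin 2) (Fin 2) R) := by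
  ext i j
  fin_cases i <;> fin_cases j <;>
    simp [Jmat, pow2Equiv, finSumFinEquiv, Fin.addCases, Matrix.fromBlocks]

theorem Jmat_conj (R : Type) [CommRing R] (g : Matrix (Fin 2) (Fin 2) R) :
    (Jmat R 1 : Matrix (Fin 2) (Fin 2) R) * gᵀ * (Jmat R 1 : Matrix (Fin 2) (Fin 2) R)ᵀ
      = g.adjugate := by
  rw [Jmat_one_eq, Matrix.adjugate_fin_two]
  ext i j
  fin_cases i <;> fin_cases j <;> simp [Matrix.mul_apply, Matrix.vecMul, dotProduct, Fin.sum_univ_two]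

theorem invol_two (R : Type) [CommRing R] (g₁ g₂ : Matrix (Fin (2 ^ 1)) (Fin (2 ^ 1)) R) :
    invol R (1 + 1) (diagBlock R 1 g₁ g₂) = diagBlock R 1 g₁.adjugate g₂.adjugate := by
  have h1 := Jmat_conj R g₁
  have h2 := Jmat_conj R g₂
  have hJ : Jmat R (1 + 1) = diagBlock R 1 (Jmat R 1) (-(Jmat R 1)) := by
    rw [Jmat, if_pos (by decide)]; rfl
  rw [invol, hJ]
  simp only [diagBlock, Matrix.reindex_apply, Matrix.transpose_submatrix,
    Matrix.submatrix_mul_equiv, Matrix.fromBlocks_transpose, Matrix.fromBlocks_multiply]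
  congr 1
  simp only [Matrix.transpose_zero, Matrix.mul_zero, Matrix.zero_mul, add_zero, zero_add,
    Matrix.transpose_neg, Matrix.neg_mul, Matrix.mul_neg, neg_neg, neg_zero]
  exact congrArg₂ (fun a b => Matrix.fromBlocks a 0 0 b) h1 h2

theorem diagBlock_mul (R : Type) [CommRing R] (m : ℕ)
    (a b c d : Matrix (Fin (2 ^ m)) (Fin (2 ^ m)) R) :
    diagBlock R m a b * diagBlock R m c d = diagBlock R m (a * c) (b * d) := by
  simp [diagBlock, Matrix.submatrix_mul_equiv, Matrix.fromBlocks_multiply]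

theorem diagBlock_one (R : Type) [CommRing R] (m : ℕ) : diagBlock R m 1 1 = 1 := by
  simp [diagBlock]

theorem mem_PhiSet_one (R : Type) [CommRing R]
    (x : Matrix (Fin (2 ^ (1 + 1))) (Fin (2 ^ (1 + 1))) R) :
    x ∈ PhiSet R 1 ↔ ∃ A : Matrix (Fin (2 ^ 1)) (Fin (2 ^ 1)) R,
      x = Matrix.reindex (pow2Equiv 1) (pow2Equiv 1)
        (Matrix.fromBlocks 0 A A.adjugate 0) := by
  constructor
  · rintro ⟨v, w, rfl⟩
    exact ⟨sus R 1 v w, by rw [phiMat, susBar_one_eq]⟩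
  · rintro ⟨A, rfl⟩
    have hA : A = sus R 1 ![A 0 0, A 0 1] ![A 1 1, - A 1 0] := by
      rw [sus_one_eq]
      ext i j
      fin_cases i <;> fin_cases j <;> simp
    refine ⟨![A 0 0, A 0 1], ![A 1 1, - A 1 0], ?_⟩
    rw [phiMat, susBar_one_eq, ← hA]

/-- Conjugation by `diag(g₁, g₂)` on off-diagonal matrices, when both determinants are `1`. -/
theorem conj_phi (R : Type) [CommRing R] (g₁ g₂ A : Matrix (Fin (2 ^ 1)) (Fin (2 ^ 1)) R)
    (h1 : g₁.det = 1) (h2 : g₂.det = 1) :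
    diagBlock R 1 g₁ g₂ * Matrix.reindex (pow2Equiv 1) (pow2Equiv 1)
        (Matrix.fromBlocks 0 A A.adjugate 0) * diagBlock R 1 g₁.adjugate g₂.adjugate
      = Matrix.reindex (pow2Equiv 1) (pow2Equiv 1)
        (Matrix.fromBlocks 0 (g₁ * A * g₂.adjugate) (g₁ * A * g₂.adjugate).adjugate 0) := by
  have h : (g₁ * A * g₂.adjugate).adjugate = g₂ * A.adjugate * g₁.adjugate := by
    rw [Matrix.adjugate_mul_distrib, Matrix.adjugate_mul_distrib,
      Matrix.adjugate_adjugate g₂ (by simp), h2]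
    simp [Matrix.mul_assoc]
  rw [h]
  simp [diagBlock, Matrix.submatrix_mul_equiv, Matrix.fromBlocks_multiply]

/-- `diag(g₁, g₂) ∈ Spin_4(R)` if and only if `det g₁ = det g₂ = 1`;
consequently `Spin_4(R) ≅ SL_2(R) × SL_2(R)`. -/
theorem spin_four (R : Type) [CommRing R]
    (g₁ g₂ : Matrix (Fin (2 ^ 1)) (Fin (2 ^ 1)) R) :
    (g₁, g₂) ∈ SpinPair R 1 ↔ g₁.det = 1 ∧ g₂.det = 1 := by
  have hmul : diagBlock R 1 g₁ g₂ * invol R (1 + 1) (diagBlock R 1 g₁ g₂)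
      = diagBlock R 1 (g₁.det • 1) (g₂.det • 1) := by
    rw [invol_two, diagBlock_mul, Matrix.mul_adjugate, Matrix.mul_adjugate]
  constructor
  · rintro ⟨-, -, h, -⟩
    simp only at h
    rw [hmul, ← diagBlock_one R 1, diagBlock, diagBlock] at h
    have h' := Matrix.fromBlocks_inj.1 ((Matrix.reindex _ _).injective h)
    constructor
    · have := congrFun (congrFun h'.1 0) 0
      simpa using this
    · have := congrFun (congrFun h'.2.2.2 0) 0
      simpa using this
  · rintro ⟨h1, h2⟩
    have hx : diagBlock R 1 g₁ g₂ * diagBlock R 1 g₁.adjugate g₂.adjugate = 1 := by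
      rw [diagBlock_mul, Matrix.mul_adjugate, Matrix.mul_adjugate, h1, h2, one_smul,
        diagBlock_one]
    have hinv := Matrix.inv_eq_right_inv hx
    refine ⟨(Matrix.isUnit_iff_isUnit_det _).2 (by simp [h1]),
      (Matrix.isUnit_iff_isUnit_det _).2 (by simp [h2]), ?_, ?_⟩
    · simp only
      rw [invol_two, hx]
    · simp only
      rw [hinv]
      ext x
      constructor
      · rintro ⟨y, hy, rfl⟩
        obtain ⟨A, rfl⟩ := (mem_PhiSet_one R y).1 hy
        exact (mem_PhiSet_one R _).2 ⟨_, conj_phi R g₁ g₂ A h1 h2⟩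
      · intro hx
        obtain ⟨A, rfl⟩ := (mem_PhiSet_one R x).1 hx
        refine ⟨_, (mem_PhiSet_one R _).2 ⟨g₁.adjugate * A * g₂, rfl⟩, ?_⟩
        simp only
        rw [conj_phi R g₁ g₂ _ h1 h2]
        have : g₁ * (g₁.adjugate * A * g₂) * g₂.adjugate = A := by
          rw [Matrix.mul_assoc, Matrix.mul_assoc, Matrix.mul_assoc, Matrix.mul_adjugate, h2,
            ← Matrix.mul_assoc, Matrix.mul_adjugate, h1]
          simp
        rw [this]
end
end

section
/- Let R be a commutative ring. Then SG_2(R) = SL_4(R): a matrix g ∈ GL_4(R) satisfies (i) g·S·g* is a Suslin matrix for every Suslin matrix S ∈ M_4(R) and (ii) l(g·S·g*) = l(S) for every Suslin matrix S ∈ M_4(R), if and only if det g = 1. Consequently Spin_6(R) ≅ SL_4(R). -/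
open Matrix

noncomputable section

/-- Explicit form of the `4 × 4` Suslin matrix. -/
lemma sus_two_explicit (R : Type) [CommRing R] (v w : Fin 3 → R) :
    sus R 2 v w = (!![v 0, 0, v 1, v 2; 0, v 0, -w 2, w 1;
      -w 1, v 2, w 0, 0; -w 2, -v 1, 0, w 0] : Matrix (Fin 4) (Fin 4) R) := by
  have e0 : (pow2Equiv 1).symm (0 : Fin 4) = Sum.inl (0 : Fin 2) := by decide
  have e1 : (pow2Equiv 1).symm (1 : Fin 4) = Sum.inl (1 : Fin 2) := by decide
  have e2 : (pow2Equiv 1).symm (2 : Fin 4) = Sum.inr (0 : Fin 2) := by decide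
  have e3 : (pow2Equiv 1).symm (3 : Fin 4) = Sum.inr (1 : Fin 2) := by decide
  have f0 : (pow2Equiv 0).symm (0 : Fin 2) = Sum.inl (0 : Fin 1) := by decide
  have f1 : (pow2Equiv 0).symm (1 : Fin 2) = Sum.inr (0 : Fin 1) := by decide
  have s1 : ∀ v w : Fin 2 → R, sus R 1 v w =
      (!![v 0, v 1; -w 1, w 0] : Matrix (Fin 2) (Fin 2) R) := by
    intro v w
    ext i j
    change Fin 2 at i j
    fin_cases i <;> fin_cases j <;>
      simp [sus, Matrix.reindex_apply, Matrix.submatrix_apply, f0, f1]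
  ext i j
  change Fin 4 at i j
  rw [sus, s1, s1]
  fin_cases i <;> fin_cases j <;>
    simp [Matrix.reindex_apply, Matrix.submatrix_apply, e0, e1, e2, e3, Matrix.one_apply]

/-- Explicit form of `J_2`. -/
lemma Jmat_two_explicit (R : Type) [CommRing R] :
    Jmat R 2 = (!![0, 1, 0, 0; -1, 0, 0, 0; 0, 0, 0, -1; 0, 0, 1, 0] :
      Matrix (Fin 4) (Fin 4) R) := by
  have e0 : (pow2Equiv 1).symm (0 : Fin 4) = Sum.inl (0 : Fin 2) := by decide
  have e1 : (pow2Equiv 1).symm (1 : Fin 4) = Sum.inl (1 : Fin 2) := by decide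
  have e2 : (pow2Equiv 1).symm (2 : Fin 4) = Sum.inr (0 : Fin 2) := by decide
  have e3 : (pow2Equiv 1).symm (3 : Fin 4) = Sum.inr (1 : Fin 2) := by decide
  have f0 : (pow2Equiv 0).symm (0 : Fin 2) = Sum.inl (0 : Fin 1) := by decide
  have f1 : (pow2Equiv 0).symm (1 : Fin 2) = Sum.inr (0 : Fin 1) := by decide
  have s1 : Jmat R 1 = (!![0, 1; -1, 0] : Matrix (Fin 2) (Fin 2) R) := by
    ext i j
    change Fin 2 at i j
    fin_cases i <;> fin_cases j <;>
      simp [Jmat, Matrix.reindex_apply, Matrix.submatrix_apply, f0, f1]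
  ext i j
  change Fin 4 at i j
  rw [Jmat, s1, if_pos (by decide)]
  fin_cases i <;> fin_cases j <;>
    simp [Matrix.reindex_apply, Matrix.submatrix_apply, e0, e1, e2, e3]

/-- The alternating matrix `S_2(v,w) J_2`. -/
def altMat (R : Type) [CommRing R] (v w : Fin 3 → R) : Matrix (Fin 4) (Fin 4) R :=
  !![0, v 0, v 2, -v 1; -v 0, 0, w 1, w 2; -v 2, -w 1, 0, -w 0; v 1, -w 2, w 0, 0]

lemma sus_mul_J (R : Type) [CommRing R] (v w : Fin 3 → R) :
    sus R 2 v w * Jmat R 2 = altMat R v w := by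
  rw [sus_two_explicit, Jmat_two_explicit]
  change (_ : Matrix (Fin 4) (Fin 4) R) * (_ : Matrix (Fin 4) (Fin 4) R) = _
  ext i j
  fin_cases i <;> fin_cases j <;> simp [altMat, Matrix.mul_apply, Fin.sum_univ_four]

lemma J_transpose_mul (R : Type) [CommRing R] : (Jmat R 2)ᵀ * Jmat R 2 = 1 := by
  rw [Jmat_two_explicit]
  change (_ : Matrix (Fin 4) (Fin 4) R) * (_ : Matrix (Fin 4) (Fin 4) R) = (1 : Matrix (Fin 4) (Fin 4) R)
  ext i j
  fin_cases i <;> fin_cases j <;> simp [Matrix.mul_apply, Fin.sum_univ_four]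

lemma J_mul_transpose (R : Type) [CommRing R] : Jmat R 2 * (Jmat R 2)ᵀ = 1 :=
  mul_eq_one_comm.mp (J_transpose_mul R)

/-- Congruence action on alternating matrices in terms of coordinates. -/
lemma altMat_congr (R : Type) [CommRing R] (g : Matrix (Fin 4) (Fin 4) R) (v w : Fin 3 → R) :
    ∃ v' w' : Fin 3 → R, g * altMat R v w * gᵀ = altMat R v' w' ∧
      v' ⬝ᵥ w' = g.det * (v ⬝ᵥ w) := by
  set M := g * altMat R v w * gᵀ with hM
  have ent : ∀ i j, M i j =
      v 0 * (g i 0 * g j 1 - g i 1 * g j 0) + v 2 * (g i 0 * g j 2 - g i 2 * g j 0)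
      - v 1 * (g i 0 * g j 3 - g i 3 * g j 0) + w 1 * (g i 1 * g j 2 - g i 2 * g j 1)
      + w 2 * (g i 1 * g j 3 - g i 3 * g j 1) - w 0 * (g i 2 * g j 3 - g i 3 * g j 2) := by
    intro i j
    simp [hM, altMat, Matrix.mul_apply, Fin.sum_univ_four]
    ring
  refine ⟨![M 0 1, -M 0 3, M 0 2], ![-M 2 3, M 1 2, M 1 3], ?_, ?_⟩
  · ext i j
    fin_cases i <;> fin_cases j <;> simp [altMat] <;> simp only [ent] <;> ring
  · simp only [dotProduct, Fin.sum_univ_three]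
    simp [ent, Matrix.det_succ_row_zero, Fin.sum_univ_succ, Fin.succAbove]
    ring

lemma sus_congr (R : Type) [CommRing R] (g : Matrix (Fin (2 ^ 2)) (Fin (2 ^ 2)) R)
    (v w : Fin 3 → R) :
    ∃ v' w' : Fin 3 → R, g * sus R 2 v w * invol R 2 g = sus R 2 v' w' ∧
      v' ⬝ᵥ w' = g.det * (v ⬝ᵥ w) := by
  obtain ⟨v', w', h, hl⟩ := altMat_congr R g v w
  refine ⟨v', w', ?_, hl⟩
  have h' : g * (sus R 2 v w * Jmat R 2) * gᵀ = sus R 2 v' w' * Jmat R 2 := by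
    rw [sus_mul_J, sus_mul_J]; exact h
  calc g * sus R 2 v w * invol R 2 g
      = g * (sus R 2 v w * Jmat R 2) * gᵀ * (Jmat R 2)ᵀ := by
        simp only [invol, Matrix.mul_assoc]
    _ = sus R 2 v' w' := by rw [h', Matrix.mul_assoc, J_mul_transpose, Matrix.mul_one]

lemma sus_two_inj (R : Type) [CommRing R] (v w v' w' : Fin 3 → R)
    (h : sus R 2 v w = sus R 2 v' w') : v = v' ∧ w = w' := by
  rw [sus_two_explicit, sus_two_explicit] at h
  have H : ∀ i j : Fin 4, _ := fun i j => congrFun (congrFun h i) j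
  have h00 := H 0 0
  have h02 := H 0 2
  have h03 := H 0 3
  have h22 := H 2 2
  have h13 := H 1 3
  have h30 := H 3 0
  simp at h00 h02 h03 h22 h13 h30
  constructor <;> ext i <;> fin_cases i <;> simp_all

/-- `SG_2(R) = SL_4(R)`: a matrix `g ∈ GL_4(R)` satisfies
(i) `g·S·g*` is a Suslin matrix for every Suslin matrix `S ∈ M_4(R)` and
(ii) `l(g·S·g*) = l(S)` for every Suslin matrix `S`, iff `det g = 1`.
Consequently `Spin_6(R) ≅ SL_4(R)`. -/
theorem SG_two_eq_SL_four (R : Type) [CommRing R]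
    (g : Matrix (Fin (2 ^ 2)) (Fin (2 ^ 2)) R) :
    g ∈ SGSet R 2 ↔ g.det = 1 := by
  constructor
  · rintro ⟨_, h⟩
    obtain ⟨v', w', h1, h2⟩ := sus_congr R g ![1, 0, 0] ![1, 0, 0]
    have h3 := h _ _ _ _ h1
    rw [h2] at h3
    simpa [dotProduct, Fin.sum_univ_three] using h3
  · intro hd
    refine ⟨⟨(Matrix.isUnit_iff_isUnit_det g).2 (by rw [hd]; exact isUnit_one), ?_⟩, ?_⟩
    · rintro S ⟨v, w, rfl⟩
      obtain ⟨v', w', h1, _⟩ := sus_congr R g v w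
      exact ⟨v', w', h1⟩
    · intro v w v' w' h
      obtain ⟨v₁, w₁, h1, h2⟩ := sus_congr R g v w
      obtain ⟨rfl, rfl⟩ := sus_two_inj R _ _ _ _ (h1.symm.trans h)
      rw [h2, hd, one_mul]
end
end

section
/- Let R be a commutative ring, n ≥ 3 odd, and let E_i := S_{n-1}(e_i, 0) and F_i := S_{n-1}(0, e_i) in M_{2^{n-1}}(R), where e_1, …, e_n is the standard basis of R^n. Then for all a ∈ R and all indices i, j with 2 ≤ i, j ≤ n and i ≠ j, the matrices I + a·E_iE_1 and I + E_1E_j are invertible and one has the commutator relations I + a·E_iE_j = [I + a·E_iE_1, I + E_1E_j] and I + a·F_iF_j = [I + a·F_iF_1, I + F_1F_j], where [x, y] := x·y·x^{−1}·y^{−1}. -/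
open Matrix

noncomputable section

theorem sus_add' (R : Type) [CommRing R] (n : ℕ) : ∀ (v w v' w' : Fin (n + 1) → R),
    sus R n (v + v') (w + w') = sus R n v w + sus R n v' w' := by
  induction n with
  | zero => intro v w v' w'; simp [sus, add_smul]
  | succ n ih =>
    intro v w v' w'
    have h1 : ∀ u u' : Fin (n + 1 + 1) → R,
      (u + u') ∘ Fin.succ = u ∘ Fin.succ + u' ∘ Fin.succ := fun _ _ => rfl
    have key : ∀ A B : Matrix (Fin (2 ^ n) ⊕ Fin (2 ^ n)) (Fin (2 ^ n) ⊕ Fin (2 ^ n)) R,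
      A.submatrix (pow2Equiv n).symm (pow2Equiv n).symm +
      B.submatrix (pow2Equiv n).symm (pow2Equiv n).symm =
      (A + B).submatrix (pow2Equiv n).symm (pow2Equiv n).symm := fun _ _ => rfl
    simp only [sus, h1, ih, Matrix.reindex_apply, Pi.add_apply, key,
      Matrix.fromBlocks_add, Matrix.transpose_add, neg_add, add_smul]

theorem sus_zero' (R : Type) [CommRing R] (n : ℕ) : sus R n 0 0 = 0 := by
  have h := sus_add' R n 0 0 0 0
  simpa using h

theorem sus_mul' (R : Type) [CommRing R] (n : ℕ) : ∀ (v w : Fin (n + 1) → R),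
    sus R n v w * (sus R n w v)ᵀ = (v ⬝ᵥ w) • 1 ∧
    (sus R n w v)ᵀ * sus R n v w = (v ⬝ᵥ w) • 1 := by
  induction n with
  | zero => intro v w; simp [sus, dotProduct, smul_smul, mul_comm]
  | succ n ih =>
    intro v w
    obtain ⟨h1, h2⟩ := ih (v ∘ Fin.succ) (w ∘ Fin.succ)
    have hd : v ⬝ᵥ w = v 0 * w 0 + (v ∘ Fin.succ) ⬝ᵥ (w ∘ Fin.succ) := by
      simp [dotProduct, Fin.sum_univ_succ]
    have hone : (1 : Matrix (Fin (2 ^ (n+1))) (Fin (2 ^ (n+1))) R) =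
        (Matrix.fromBlocks 1 0 0 1).submatrix (pow2Equiv n).symm (pow2Equiv n).symm := by
      rw [Matrix.fromBlocks_one, Matrix.submatrix_one_equiv]
    have hone' : (v ⬝ᵥ w) • (1 : Matrix (Fin (2 ^ (n+1))) (Fin (2 ^ (n+1))) R) =
        (Matrix.fromBlocks ((v ⬝ᵥ w) • 1) 0 0 ((v ⬝ᵥ w) • 1)).submatrix
          (pow2Equiv n).symm (pow2Equiv n).symm := by
      have hz : (Matrix.fromBlocks ((v ⬝ᵥ w) • 1) 0 0 ((v ⬝ᵥ w) • 1) :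
          Matrix (Fin (2 ^ n) ⊕ Fin (2 ^ n)) (Fin (2 ^ n) ⊕ Fin (2 ^ n)) R)
          = (v ⬝ᵥ w) • Matrix.fromBlocks 1 0 0 1 := by
        rw [Matrix.fromBlocks_smul]; simp
      rw [hone, hz]; rfl
    rw [hone']
    simp only [sus, Matrix.reindex_apply, Matrix.transpose_submatrix,
      Matrix.fromBlocks_transpose, Matrix.submatrix_mul_equiv, Matrix.fromBlocks_multiply,
      Matrix.transpose_neg, Matrix.transpose_smul, Matrix.transpose_transpose,
      Matrix.transpose_one, neg_mul, mul_neg, neg_neg, h1, h2, hd]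
    constructor <;> congr 2 <;> simp [smul_smul, add_smul, mul_comm, add_comm]

theorem sus_sq' (R : Type) [CommRing R] (n : ℕ) (v w : Fin (n + 1 + 1) → R)
    (hv : v 0 = 0) (hw : w 0 = 0) (h : v ⬝ᵥ w = 0) :
    sus R (n + 1) v w * sus R (n + 1) v w = 0 := by
  obtain ⟨h1, h2⟩ := sus_mul' R n (v ∘ Fin.succ) (w ∘ Fin.succ)
  have hd : (v ∘ Fin.succ) ⬝ᵥ (w ∘ Fin.succ) = 0 := by
    rw [← h]; simp [dotProduct, Fin.sum_univ_succ, hv]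
  simp [sus, hv, hw, Matrix.submatrix_mul_equiv, Matrix.fromBlocks_multiply, h1, h2, hd]

theorem sus_P' (R : Type) [CommRing R] (n : ℕ) :
    sus R (n + 1) (Pi.single 0 1) 0 = Matrix.reindex (pow2Equiv n) (pow2Equiv n)
      (Matrix.fromBlocks 1 0 0 0) := by
  have h : (Pi.single 0 1 : Fin (n + 1 + 1) → R) ∘ Fin.succ = 0 := by
    ext i; simp
  have h' : (0 : Fin (n + 1 + 1) → R) ∘ Fin.succ = 0 := rfl
  simp [sus, h, h', sus_zero']

theorem sus_Q' (R : Type) [CommRing R] (n : ℕ) :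
    sus R (n + 1) 0 (Pi.single 0 1) = Matrix.reindex (pow2Equiv n) (pow2Equiv n)
      (Matrix.fromBlocks 0 0 0 1) := by
  have h : (Pi.single 0 1 : Fin (n + 1 + 1) → R) ∘ Fin.succ = 0 := by
    ext i; simp
  have h' : (0 : Fin (n + 1 + 1) → R) ∘ Fin.succ = 0 := rfl
  simp [sus, h, h', sus_zero']

theorem abs_comm' {R : Type} [CommRing R] {N : Type} [Fintype N] [DecidableEq N]
    (P x y : Matrix N N R) (a : R) (hP : P * P = P) (hx : P * x + x * P = x)
    (hy : P * y + y * P = y) (hxx : x * x = 0) (hyy : y * y = 0)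
    (hxy : (x + y) * (x + y) = 0) :
    IsUnit (1 + a • (x * P)) ∧ IsUnit (1 + P * y) ∧
    1 + a • (x * y) = (1 + a • (x * P)) * (1 + P * y) * (1 + a • (x * P))⁻¹
      * (1 + P * y)⁻¹ := by
  have hyx : y * x = -(x * y) := by
    have : (x + y) * (x + y) = x * x + y * x + (x * y + y * y) := by noncomm_ring
    rw [hxy, hxx, hyy, zero_add, add_zero] at this
    exact eq_neg_of_add_eq_zero_left this.symm
  have hPxP : P * x * P = 0 := by
    have := congrArg (P * ·) hx
    simp only [mul_add, ← mul_assoc, hP] at this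
    simpa using this
  have hPyP : P * y * P = 0 := by
    have := congrArg (P * ·) hy
    simp only [mul_add, ← mul_assoc, hP] at this
    simpa using this
  have hPxy : P * x * y = x * y * P := by
    have e1 : P * x = x - x * P := eq_sub_of_add_eq hx
    have e2 : y * P = y - P * y := eq_sub_of_add_eq' hy
    rw [e1, mul_assoc x y P, e2]; noncomm_ring
  have hyPy : y * P * y = 0 := by
    have e2 : P * y = y - y * P := eq_sub_of_add_eq hy
    have h3 : y * P * y = y * y - y * y * P := by rw [mul_assoc, e2]; noncomm_ring
    rw [h3, hyy]; simp
  have hxPx : x * P * x = 0 := by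
    have e2 : P * x = x - x * P := eq_sub_of_add_eq hx
    have h3 : x * P * x = x * x - x * x * P := by rw [mul_assoc, e2]; noncomm_ring
    rw [h3, hxx]; simp
  obtain ⟨X, hX⟩ : ∃ X, X = a • (x * P) := ⟨_, rfl⟩
  obtain ⟨Y, hY⟩ : ∃ Y, Y = P * y := ⟨_, rfl⟩
  have hXX : X * X = 0 := by
    have : x * P * (x * P) = x * (P * x * P) := by noncomm_ring
    rw [hX, smul_mul_smul_comm, this, hPxP]; simp
  have hYY : Y * Y = 0 := by
    have : P * y * (P * y) = (P * y * P) * y := by noncomm_ring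
    rw [hY, this, hPyP]; simp
  have hXYe : X * Y = a • (x * P * y) := by
    rw [hX, hY, smul_mul_assoc]
    have : x * P * (P * y) = x * (P * P) * y := by noncomm_ring
    rw [this, hP]
  have hYXe : Y * X = -(a • (P * x * y)) := by
    rw [hX, hY, mul_smul_comm]
    have : P * y * (x * P) = P * (y * x) * P := by noncomm_ring
    rw [this, hyx]
    have : P * -(x * y) * P = -((P * x * y) * P) := by noncomm_ring
    rw [this, hPxy, mul_assoc (x * y), hP, smul_neg]
  have hYXY : Y * X * Y = 0 := by
    rw [hYXe, hPxy, hY]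
    have : x * y * P * (P * y) = x * (y * (P * P) * y) := by noncomm_ring
    rw [neg_mul, smul_mul_assoc, this, hP, hyPy]; simp
  have hXYX : X * Y * X = 0 := by
    rw [mul_assoc, hYXe, hX]
    have : x * P * (P * x * y) = x * (P * P) * x * y := by noncomm_ring
    rw [mul_neg, smul_mul_smul_comm, this, hP, hxPx]; simp
  have hsum : X * Y - Y * X = a • (x * y) := by
    rw [hXYe, hYXe, sub_neg_eq_add, ← smul_add, ← add_mul, add_comm (x * P), hx]
  have iX : (1 + X) * (1 - X) = 1 := by
    have : (1 + X) * (1 - X) = 1 - X * X := by noncomm_ring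
    rw [this, hXX, sub_zero]
  have iY : (1 + Y) * (1 - Y) = 1 := by
    have : (1 + Y) * (1 - Y) = 1 - Y * Y := by noncomm_ring
    rw [this, hYY, sub_zero]
  rw [← hX, ← hY, ← hsum, Matrix.inv_eq_right_inv iX, Matrix.inv_eq_right_inv iY]
  refine ⟨IsUnit.of_mul_eq_one _ iX, IsUnit.of_mul_eq_one _ iY, ?_⟩
  have : (1 + X) * (1 + Y) * (1 - X) * (1 - Y) = 1 + X * Y - Y * X - X * X - Y * Y
      + (X * X) * Y + Y * X * Y - X * Y * X - X * (Y * Y) + X * Y * X * Y := by noncomm_ring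
  rw [this, hYXY, hXYX, hXX, hYY]
  noncomm_ring

theorem sus_off' (R : Type) [CommRing R] (n : ℕ) (v w : Fin (n + 1 + 1) → R)
    (hv : v 0 = 0) (hw : w 0 = 0) :
    (sus R (n + 1) (Pi.single 0 1) 0 * sus R (n + 1) v w
      + sus R (n + 1) v w * sus R (n + 1) (Pi.single 0 1) 0 = sus R (n + 1) v w) ∧
    (sus R (n + 1) 0 (Pi.single 0 1) * sus R (n + 1) v w
      + sus R (n + 1) v w * sus R (n + 1) 0 (Pi.single 0 1) = sus R (n + 1) v w) := by
  rw [sus_P', sus_Q']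
  have key : ∀ A B : Matrix (Fin (2 ^ n) ⊕ Fin (2 ^ n)) (Fin (2 ^ n) ⊕ Fin (2 ^ n)) R,
    A.submatrix (pow2Equiv n).symm (pow2Equiv n).symm +
    B.submatrix (pow2Equiv n).symm (pow2Equiv n).symm =
    (A + B).submatrix (pow2Equiv n).symm (pow2Equiv n).symm := fun _ _ => rfl
  constructor <;>
  simp [sus, hv, hw, Matrix.submatrix_mul_equiv, Matrix.fromBlocks_multiply, key,
    Matrix.fromBlocks_add]

/-- for odd `n ≥ 3` (here `n = m + 1`), `a ∈ R` and indices
`i, j ≠ 1`, `i ≠ j` (1-based; here `i, j ≠ 0`), the matrices `I + a·E_iE_1` and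
`I + E_1E_j` are invertible, and
`I + a·E_iE_j = [I + a·E_iE_1, I + E_1E_j]`, `I + a·F_iF_j = [I + a·F_iF_1, I + F_1F_j]`. -/
theorem epin_commutator_relations (R : Type) [CommRing R] (m : ℕ) (hm : 2 ≤ m)
    (hodd : Odd (m + 1)) (a : R) (i j : Fin (m + 1)) (hi : i ≠ 0) (hj : j ≠ 0)
    (hij : i ≠ j) :
    IsUnit (1 + a • (Emat R m i * Emat R m 0)) ∧
    IsUnit (1 + Emat R m 0 * Emat R m j) ∧
    IsUnit (1 + a • (Fmat R m i * Fmat R m 0)) ∧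
    IsUnit (1 + Fmat R m 0 * Fmat R m j) ∧
    1 + a • (Emat R m i * Emat R m j) =
      (1 + a • (Emat R m i * Emat R m 0)) * (1 + Emat R m 0 * Emat R m j) *
        (1 + a • (Emat R m i * Emat R m 0))⁻¹ * (1 + Emat R m 0 * Emat R m j)⁻¹ ∧
    1 + a • (Fmat R m i * Fmat R m j) =
      (1 + a • (Fmat R m i * Fmat R m 0)) * (1 + Fmat R m 0 * Fmat R m j) *
        (1 + a • (Fmat R m i * Fmat R m 0))⁻¹ * (1 + Fmat R m 0 * Fmat R m j)⁻¹ := by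
  obtain ⟨n, rfl⟩ : ∃ n, m = n + 1 := ⟨m - 1, by omega⟩
  have hi0 : (Pi.single i 1 : Fin (n + 1 + 1) → R) 0 = 0 := by simp [Pi.single_apply, hi.symm]
  have hj0 : (Pi.single j 1 : Fin (n + 1 + 1) → R) 0 = 0 := by simp [Pi.single_apply, hj.symm]
  have hE := abs_comm' (Emat R (n + 1) 0) (Emat R (n + 1) i) (Emat R (n + 1) j) a
    (by simp [Emat, sus_P', Matrix.submatrix_mul_equiv, Matrix.fromBlocks_multiply])
    (sus_off' R n _ _ hi0 rfl).1 (sus_off' R n _ _ hj0 rfl).1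
    (sus_sq' R n _ _ hi0 rfl (by simp)) (sus_sq' R n _ _ hj0 rfl (by simp))
    (by
      unfold Emat
      rw [← sus_add']
      exact sus_sq' R n _ _ (by rw [Pi.add_apply, hi0, hj0, add_zero]) (by simp) (by simp))
  have hF := abs_comm' (Fmat R (n + 1) 0) (Fmat R (n + 1) i) (Fmat R (n + 1) j) a
    (by simp [Fmat, sus_Q', Matrix.submatrix_mul_equiv, Matrix.fromBlocks_multiply])
    (sus_off' R n _ _ rfl hi0).2 (sus_off' R n _ _ rfl hj0).2
    (sus_sq' R n _ _ rfl hi0 (by simp)) (sus_sq' R n _ _ rfl hj0 (by simp))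
    (by
      unfold Fmat
      rw [← sus_add']
      exact sus_sq' R n _ _ (by simp) (by rw [Pi.add_apply, hi0, hj0, add_zero]) (by simp))
  exact ⟨hE.1, hE.2.1, hF.1, hF.2.1, hE.2.2, hF.2.2⟩
end
end
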